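/- If X ~ N(0, Σ) is a d-dimensional Gaussian with d ≥ 2 and β ≠ 2, then for all continuously differentiable g with g and ∇g of at most polynomial growth, (β/((β-2)(d-1))) E[(Xᵀ Σ⁻¹ X · Σ - X Xᵀ) ∇g(X)] = E[(2/(β-2)) Σ ∇g(X) + X g(X)]. -/

import Mathlib

open MeasureTheory Real Matrix

/-- The gradient of `f : ℝ^d → ℝ` at `x`, as the vector of partial derivatives. -/
noncomputable def grad {d : ℕ} (f : (Fin d → ℝ) → ℝ) (x : Fin d → ℝ) : Fin d → ℝ :=
  fun i => fderiv ℝ f x (Pi.single i 1)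

/-!
Write `Q x = xᵀ S⁻¹ x` and let `s` be the `i`-th row of `S`, so that `⟨s, x⟩_{S⁻¹} = x i`. The
`i`-th row of `Q S - x xᵀ` is the vector field `V x = Q x • s - x i • x`, which is tangent to the
level sets of `Q` and has divergence `-(d - 1) x i`. Integrating the divergence of `g • V` against
the Gaussian weight therefore gives `E[V · ∇g] = (d - 1) E[x i g]`, whereas the constant field `s`
gives Stein's lemma `E[s · ∇g] = E[x i g]`. Hence both sides of the theorem
equal `β / (β - 2) * E[x i g]`.
-/

open Asymptotics Module

section PolynomialGrowth

variable {E F F' G : Type*} [NormedAddCommGroup E] [NormedAddCommGroup F] [NormedAddCommGroup F']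
  [NormedAddCommGroup G]

/-- Functions of at most polynomial growth: `‖f x‖ ≤ C * (1 + ‖x‖) ^ n` for all `x`. In contrast to
`Function.HasTemperateGrowth`, nothing is required of the derivatives of `f`. -/
def HasPolynomialGrowth (f : E → F) : Prop :=
  ∃ n : ℕ, f =O[⊤] fun x ↦ (1 + ‖x‖) ^ n

namespace HasPolynomialGrowth

theorem exists_nonneg_bound {f : E → F} (hf : HasPolynomialGrowth f) :
    ∃ (C : ℝ) (n : ℕ), 0 ≤ C ∧ ∀ x, ‖f x‖ ≤ C * (1 + ‖x‖) ^ n := by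
  obtain ⟨n, hn⟩ := hf
  obtain ⟨C, hC, hbound⟩ := hn.exists_nonneg
  refine ⟨C, n, hC, fun x ↦ (isBigOWith_top.1 hbound x).trans_eq ?_⟩
  rw [Real.norm_of_nonneg (by positivity)]

theorem of_bound {f : E → F} {C : ℝ} {n : ℕ} (h : ∀ x, ‖f x‖ ≤ C * (1 + ‖x‖) ^ n) :
    HasPolynomialGrowth f :=
  ⟨n, isBigO_top.2 ⟨C, fun x ↦ (h x).trans_eq (by rw [Real.norm_of_nonneg (by positivity)])⟩⟩

theorem add {f g : E → F} (hf : HasPolynomialGrowth f) (hg : HasPolynomialGrowth g) :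
    HasPolynomialGrowth fun x ↦ f x + g x := by
  obtain ⟨m, hm⟩ := hf
  obtain ⟨n, hn⟩ := hg
  have weaken {k l : ℕ} (hkl : k ≤ l) :
      (fun x : E ↦ (1 + ‖x‖) ^ k) =O[⊤] fun x ↦ (1 + ‖x‖) ^ l :=
    isBigO_of_le _ fun x ↦ by
      rw [Real.norm_of_nonneg (by positivity), Real.norm_of_nonneg (by positivity)]
      exact pow_le_pow_right₀ (by linarith [norm_nonneg x]) hkl
  exact ⟨max m n, (hm.trans (weaken (le_max_left m n))).add (hn.trans (weaken (le_max_right m n)))⟩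

variable [NormedSpace ℝ F] [NormedSpace ℝ F'] [NormedSpace ℝ G]

theorem clm_comp (L : F →L[ℝ] G) {f : E → F} (hf : HasPolynomialGrowth f) :
    HasPolynomialGrowth fun x ↦ L (f x) := by
  obtain ⟨n, hn⟩ := hf
  exact ⟨n, (L.isBigO_comp f ⊤).trans hn⟩

theorem bilinear (L : F →L[ℝ] F' →L[ℝ] G) {f : E → F} {g : E → F'}
    (hf : HasPolynomialGrowth f) (hg : HasPolynomialGrowth g) :
    HasPolynomialGrowth fun x ↦ L (f x) (g x) := by
  obtain ⟨m, hm⟩ := hf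
  obtain ⟨n, hn⟩ := hg
  refine ⟨m + n, ?_⟩
  simp only [pow_add]
  exact (L.isBoundedBilinearMap.isBigO_comp (g := f) (h := g)).trans
    (hm.norm_left.mul hn.norm_left)

variable [NormedSpace ℝ E]

theorem of_fderiv {f : E → F} (hf : Differentiable ℝ f)
    (hf' : HasPolynomialGrowth (fderiv ℝ f)) : HasPolynomialGrowth f := by
  obtain ⟨C, n, hC, hbound⟩ := hf'.exists_nonneg_bound
  refine .of_bound (C := ‖f 0‖ + C) (n := n + 1) fun x ↦ ?_
  have mean_value : ‖f x - f 0‖ ≤ C * (1 + ‖x‖) ^ n * ‖x - 0‖ := by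
    refine (convex_closedBall (0 : E) ‖x‖).norm_image_sub_le_of_norm_fderiv_le (𝕜 := ℝ)
      (fun y _ ↦ hf y) (fun y hy ↦ (hbound y).trans ?_) (by simp) (by simp)
    gcongr
    simpa using hy
  calc ‖f x‖ ≤ ‖f 0‖ + ‖f x - f 0‖ := norm_le_norm_add_norm_sub' _ _
    _ ≤ ‖f 0‖ * (1 + ‖x‖) ^ (n + 1) + C * (1 + ‖x‖) ^ n * (1 + ‖x‖) := by
        gcongr
        · exact le_mul_of_one_le_right (norm_nonneg _) (one_le_pow₀ (by simp))
        · refine mean_value.trans ?_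
          gcongr
          simp
    _ = (‖f 0‖ + C) * (1 + ‖x‖) ^ (n + 1) := by ring

theorem fderiv_of_hasTemperateGrowth {f : E → F} (hf : f.HasTemperateGrowth) :
    HasPolynomialGrowth (fderiv ℝ f) := by
  obtain ⟨n, C, hbound⟩ := hf.2 1
  exact .of_bound fun x ↦ by simpa using hbound x

theorem fderiv_clm_comp (L : F →L[ℝ] G) {f : E → F} (hf : Differentiable ℝ f)
    (hf' : HasPolynomialGrowth (fderiv ℝ f)) : HasPolynomialGrowth (fderiv ℝ fun x ↦ L (f x)) := by
  have chain_rule : (fderiv ℝ fun x ↦ L (f x)) = fun x ↦ L.comp (fderiv ℝ f x) :=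
    funext fun x ↦ (L.hasFDerivAt.comp x (hf x).hasFDerivAt).fderiv
  rw [chain_rule]
  exact clm_comp (ContinuousLinearMap.compL ℝ E F G L) hf'

theorem fderiv_smul {g : E → ℝ} {V : E → F} (hg : Differentiable ℝ g)
    (hg' : HasPolynomialGrowth (fderiv ℝ g)) (hV : Differentiable ℝ V)
    (hV' : HasPolynomialGrowth (fderiv ℝ V)) :
    HasPolynomialGrowth (fderiv ℝ fun x ↦ g x • V x) := by
  have leibniz : (fderiv ℝ fun x ↦ g x • V x) =
      fun x ↦ g x • fderiv ℝ V x + (fderiv ℝ g x).smulRight (V x) :=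
    funext fun x ↦ fderiv_fun_smul (hg x) (hV x)
  rw [leibniz]
  exact (bilinear (.lsmul ℝ ℝ) (of_fderiv hg hg') hV').add
    (bilinear (.smulRightL ℝ E F) hg' (of_fderiv hV hV'))

end HasPolynomialGrowth

end PolynomialGrowth

section Divergence

variable {E : Type*} [NormedAddCommGroup E] [NormedSpace ℝ E] [FiniteDimensional ℝ E]

/-- The divergence `∑ j, ∂ⱼ Vⱼ` of a vector field, as the trace of its derivative. -/
noncomputable def divergence (V : E → E) (x : E) : ℝ :=
  LinearMap.trace ℝ E (fderiv ℝ V x)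

theorem divergence_eq_sum_fderiv_coord {ι : Type*} [Fintype ι] (b : Basis ι ℝ E) {V : E → E}
    {x : E} (hV : DifferentiableAt ℝ V x) :
    divergence V x = ∑ j, fderiv ℝ (fun y ↦ b.coord j (V y)) x (b j) := by
  classical
  have fderiv_coord (j : ι) : fderiv ℝ (fun y ↦ b.coord j (V y)) x (b j) =
      b.coord j (fderiv ℝ V x (b j)) :=
    congrArg (· (b j)) ((b.coord j).toContinuousLinearMap.hasFDerivAt.comp x hV.hasFDerivAt).fderiv
  rw [Finset.sum_congr rfl fun j _ ↦ fderiv_coord j]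
  simp only [divergence, LinearMap.trace_eq_matrix_trace ℝ b, Matrix.trace,
    Matrix.diag_apply, LinearMap.toMatrix_apply, Basis.coord_apply, ContinuousLinearMap.coe_coe]

theorem divergence_smul {g : E → ℝ} {V : E → E} {x : E} (hg : DifferentiableAt ℝ g x)
    (hV : DifferentiableAt ℝ V x) :
    divergence (fun y ↦ g y • V y) x = fderiv ℝ g x (V x) + g x * divergence V x := by
  have trace_smulRight : LinearMap.trace ℝ E ((fderiv ℝ g x).smulRight (V x)) =
      fderiv ℝ g x (V x) := LinearMap.trace_smulRight (fderiv ℝ g x).toLinearMap (V x)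
  rw [divergence, fderiv_fun_smul hg hV, ContinuousLinearMap.toLinearMap_add, map_add,
    trace_smulRight, ContinuousLinearMap.toLinearMap_smul, map_smul, smul_eq_mul, add_comm,
    divergence]

end Divergence

section BilinearForm

variable {E : Type*} [NormedAddCommGroup E] [NormedSpace ℝ E]

theorem isCoercive_of_pos [FiniteDimensional ℝ E] {B : E →L[ℝ] E →L[ℝ] ℝ}
    (hpos : ∀ x, x ≠ 0 → 0 < B x x) : IsCoercive B := by
  have normalize_mem {x : E} (hx : x ≠ 0) : ‖x‖⁻¹ • x ∈ Metric.sphere (0 : E) 1 := by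
    simp [norm_smul, hx]
  rcases subsingleton_or_nontrivial E with hE | hE
  · exact ⟨1, one_pos, fun x ↦ by simp [Subsingleton.elim x 0]⟩
  obtain ⟨y, hy, hmin⟩ := (isCompact_sphere (0 : E) 1).exists_isMinOn
    (NormedSpace.sphere_nonempty.2 zero_le_one)
    (f := fun x ↦ B x x) (by fun_prop)
  refine ⟨B y y, hpos y (Metric.ne_of_mem_sphere hy one_ne_zero), fun x ↦ ?_⟩
  rcases eq_or_ne x 0 with rfl | hx
  · simp
  have min_le : B y y ≤ ‖x‖⁻¹ * (‖x‖⁻¹ * B x x) := by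
    simpa using isMinOn_iff.1 hmin _ (normalize_mem hx)
  calc B y y * ‖x‖ * ‖x‖ ≤ ‖x‖⁻¹ * (‖x‖⁻¹ * B x x) * ‖x‖ * ‖x‖ := by gcongr
    _ = B x x := by field_simp

theorem hasFDerivAt_self_apply {B : E →L[ℝ] E →L[ℝ] ℝ} (hsymm : ∀ x y, B x y = B y x) (x : E) :
    HasFDerivAt (fun y ↦ B y y) ((2 : ℝ) • B x) x := by
  refine (B.hasFDerivAt.clm_apply (hasFDerivAt_id x)).congr_fderiv ?_
  ext v
  simp [hsymm v x, two_mul]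

/-- The vector field `x ↦ B(x, x) s - B(s, x) x`, which is tangent to the level sets of
`x ↦ B(x, x)`. -/
noncomputable def tangentialField (B : E →L[ℝ] E →L[ℝ] ℝ) (s x : E) : E :=
  B x x • s - B s x • x

theorem apply_tangentialField (B : E →L[ℝ] E →L[ℝ] ℝ) (s x : E) :
    B (tangentialField B s x) x = 0 := by
  simp only [tangentialField, map_sub, map_smul, _root_.sub_apply,
    _root_.smul_apply, smul_eq_mul]
  ring

theorem hasTemperateGrowth_tangentialField (B : E →L[ℝ] E →L[ℝ] ℝ) (s : E) :
    (tangentialField B s).HasTemperateGrowth := by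
  have quadratic : (fun x ↦ B x x).HasTemperateGrowth := B.bilinear_hasTemperateGrowth .id' .id'
  have linear : Function.HasTemperateGrowth (B s) := by fun_prop
  exact (quadratic.smul (.const s)).sub (linear.smul .id')

theorem divergence_tangentialField [FiniteDimensional ℝ E] {B : E →L[ℝ] E →L[ℝ] ℝ}
    (hsymm : ∀ x y, B x y = B y x) (s x : E) :
    divergence (tangentialField B s) x = -(finrank ℝ E - 1) * B s x := by
  have hderiv : HasFDerivAt (tangentialField B s) (((2 : ℝ) • B x).smulRight s -
      (B s x • ContinuousLinearMap.id ℝ E + (B s).smulRight x)) x :=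
    ((hasFDerivAt_self_apply hsymm x).smul_const s).sub ((B s).hasFDerivAt.smul (hasFDerivAt_id x))
  rw [divergence, hderiv.fderiv]
  simp only [ContinuousLinearMap.toLinearMap_sub, ContinuousLinearMap.toLinearMap_add,
    ContinuousLinearMap.toLinearMap_smul, ContinuousLinearMap.coe_smulRight,
    ContinuousLinearMap.coe_id, map_sub, map_add, map_smul, LinearMap.trace_smulRight,
    LinearMap.trace_id, LinearMap.smul_apply, ContinuousLinearMap.coe_coe, smul_eq_mul, hsymm x s]
  ring

end BilinearForm

section GaussianWeight

variable {E : Type*} [NormedAddCommGroup E] [NormedSpace ℝ E] {B : E →L[ℝ] E →L[ℝ] ℝ}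

/-- The unnormalized density `exp (-B(x, x) / 2)` of the centered Gaussian whose precision form
is `B`. -/
noncomputable def gaussianWeight (B : E →L[ℝ] E →L[ℝ] ℝ) (x : E) : ℝ :=
  Real.exp (-(B x x) / 2)

theorem continuous_gaussianWeight (B : E →L[ℝ] E →L[ℝ] ℝ) : Continuous (gaussianWeight B) := by
  unfold gaussianWeight
  fun_prop

theorem hasFDerivAt_gaussianWeight (hsymm : ∀ x y, B x y = B y x) (x : E) :
    HasFDerivAt (gaussianWeight B) (-(gaussianWeight B x • B x)) x := by
  have hexponent : HasFDerivAt (fun y ↦ -(B y y) / 2) (-B x) x := by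
    simp only [div_eq_mul_inv]
    refine ((hasFDerivAt_self_apply hsymm x).neg.mul_const (2⁻¹ : ℝ)).congr_fderiv ?_
    ext v
    simp
  exact hexponent.exp.congr_fderiv (by simp [gaussianWeight])

theorem exists_one_add_norm_pow_mul_gaussianWeight_le (hB : IsCoercive B) (n : ℕ) :
    ∃ K, ∀ x, (1 + ‖x‖) ^ n * gaussianWeight B x ≤ K := by
  obtain ⟨c, hc, hcoercive⟩ := hB
  refine ⟨n.factorial * Real.exp (1 + 1 / (2 * c)), fun x ↦ ?_⟩
  have young : ‖x‖ ≤ c * ‖x‖ * ‖x‖ / 2 + 1 / (2 * c) := by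
    have : c * ‖x‖ * ‖x‖ / 2 + 1 / (2 * c) - ‖x‖ = (c * ‖x‖ - 1) ^ 2 / (2 * c) := by
      field_simp
      ring
    linarith [div_nonneg (sq_nonneg (c * ‖x‖ - 1)) (by positivity : 0 ≤ 2 * c)]
  have pow_le : (1 + ‖x‖) ^ n ≤ n.factorial * Real.exp (1 + ‖x‖) :=
    (div_le_iff₀' (by positivity)).1
      (Real.pow_div_factorial_le_exp (1 + ‖x‖) (by positivity) n)
  calc (1 + ‖x‖) ^ n * gaussianWeight B x
      ≤ n.factorial * Real.exp (1 + ‖x‖) * Real.exp (-(B x x) / 2) := by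
        unfold gaussianWeight
        gcongr
    _ = n.factorial * Real.exp (1 + ‖x‖ + -(B x x) / 2) := by rw [mul_assoc, ← Real.exp_add]
    _ ≤ n.factorial * Real.exp (1 + 1 / (2 * c)) := by
        refine mul_le_mul_of_nonneg_left (Real.exp_le_exp.2 ?_) (by positivity)
        linarith [hcoercive x]

variable [MeasurableSpace E] [BorelSpace E] {μ : Measure E}

theorem HasPolynomialGrowth.integrable_mul_gaussianWeight [μ.HasTemperateGrowth]
    (hB : IsCoercive B) {f : E → ℝ} (hf : HasPolynomialGrowth f)
    (hmeas : AEStronglyMeasurable f μ) : Integrable (fun x ↦ f x * gaussianWeight B x) μ := by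
  obtain ⟨C, n, hC, hbound⟩ := hf.exists_nonneg_bound
  obtain ⟨K, hK⟩ := exists_one_add_norm_pow_mul_gaussianWeight_le hB (n + μ.integrablePower)
  refine (μ.integrable_pow_neg_integrablePower.const_mul (C * K)).mono'
    (hmeas.mul (continuous_gaussianWeight B).aestronglyMeasurable) (.of_forall fun x ↦ ?_)
  have weight_nonneg : 0 ≤ gaussianWeight B x := (Real.exp_pos _).le
  rw [Real.rpow_neg (by positivity), Real.rpow_natCast, ← div_eq_mul_inv,
    le_div_iff₀ (by positivity), norm_mul, Real.norm_of_nonneg weight_nonneg]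
  calc ‖f x‖ * gaussianWeight B x * (1 + ‖x‖) ^ μ.integrablePower
      ≤ C * (1 + ‖x‖) ^ n * gaussianWeight B x * (1 + ‖x‖) ^ μ.integrablePower := by
        gcongr
        exact hbound x
    _ = C * ((1 + ‖x‖) ^ (n + μ.integrablePower) * gaussianWeight B x) := by ring
    _ ≤ C * K := by gcongr; exact hK x

end GaussianWeight

section Stein

variable {E : Type*} [NormedAddCommGroup E] [NormedSpace ℝ E] [FiniteDimensional ℝ E]
  [MeasurableSpace E] [BorelSpace E] {μ : Measure E} [μ.IsAddHaarMeasure]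
  {B : E →L[ℝ] E →L[ℝ] ℝ} {f g : E → ℝ}

theorem integrable_apply_mul_gaussianWeight (hB : IsCoercive B) (hf : Differentiable ℝ f)
    (hf' : HasPolynomialGrowth (fderiv ℝ f)) (s : E) :
    Integrable (fun x ↦ B s x * f x * gaussianWeight B x) μ := by
  have linear_growth : HasPolynomialGrowth (B s) :=
    .of_fderiv (B s).differentiable (.fderiv_of_hasTemperateGrowth (by fun_prop))
  exact (linear_growth.bilinear (.mul ℝ ℝ) (.of_fderiv hf hf')).integrable_mul_gaussianWeight hB
    ((B s).continuous.mul hf.continuous).aestronglyMeasurable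

theorem integrable_fderiv_apply_mul_gaussianWeight (hB : IsCoercive B)
    (hf' : HasPolynomialGrowth (fderiv ℝ f)) {V : E → E} (hV : V.HasTemperateGrowth) :
    Integrable (fun x ↦ fderiv ℝ f x (V x) * gaussianWeight B x) μ := by
  have hV_diff : Differentiable ℝ V := hV.1.differentiable (by simp)
  have hV_growth : HasPolynomialGrowth V := .of_fderiv hV_diff (.fderiv_of_hasTemperateGrowth hV)
  refine (hf'.bilinear (.id ℝ (E →L[ℝ] ℝ)) hV_growth).integrable_mul_gaussianWeight hB ?_
  exact (ContinuousLinearMap.id ℝ (E →L[ℝ] ℝ)).aestronglyMeasurable_comp₂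
    (measurable_fderiv ℝ f).aestronglyMeasurable hV_diff.continuous.aestronglyMeasurable

theorem integral_fderiv_apply_mul_gaussianWeight (hsymm : ∀ x y, B x y = B y x) (hB : IsCoercive B)
    (hf : Differentiable ℝ f) (hf' : HasPolynomialGrowth (fderiv ℝ f)) (s : E) :
    ∫ x, fderiv ℝ f x s * gaussianWeight B x ∂μ = ∫ x, B s x * f x * gaussianWeight B x ∂μ := by
  have fderiv_weight (x : E) :
      fderiv ℝ (gaussianWeight B) x s = -(B s x * gaussianWeight B x) := by
    rw [(hasFDerivAt_gaussianWeight hsymm x).fderiv]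
    simp [hsymm x s, mul_comm]
  have by_parts := integral_mul_fderiv_eq_neg_fderiv_mul_of_integrable (μ := μ)
    (f := gaussianWeight B) (g := f) (v := s)
    ((integrable_apply_mul_gaussianWeight hB hf hf' s).neg.congr
      (.of_forall fun x ↦ by simp only [Pi.neg_apply, fderiv_weight]; ring))
    ((integrable_fderiv_apply_mul_gaussianWeight hB hf' (.const s)).congr
      (.of_forall fun x ↦ mul_comm _ _))
    (((HasPolynomialGrowth.of_fderiv hf hf').integrable_mul_gaussianWeight hB
      hf.continuous.aestronglyMeasurable).congr (.of_forall fun x ↦ mul_comm _ _))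
    (fun x _ ↦ (hasFDerivAt_gaussianWeight hsymm x).differentiableAt) (fun x _ ↦ hf x)
  calc ∫ x, fderiv ℝ f x s * gaussianWeight B x ∂μ
      = -∫ x, fderiv ℝ (gaussianWeight B) x s * f x ∂μ := by simpa only [mul_comm] using by_parts
    _ = ∫ x, B s x * f x * gaussianWeight B x ∂μ := by
        rw [← integral_neg]
        congr 1 with x
        rw [fderiv_weight]
        ring

theorem integral_divergence_mul_gaussianWeight (hsymm : ∀ x y, B x y = B y x) (hB : IsCoercive B)
    {W : E → E} (hW : Differentiable ℝ W) (hW' : HasPolynomialGrowth (fderiv ℝ W)) :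
    ∫ x, divergence W x * gaussianWeight B x ∂μ = ∫ x, B (W x) x * gaussianWeight B x ∂μ := by
  let b := finBasis ℝ E
  have coord_diff (j) : Differentiable ℝ fun x ↦ b.coord j (W x) :=
    (b.coord j).toContinuousLinearMap.differentiable.comp hW
  have coord_growth (j) : HasPolynomialGrowth (fderiv ℝ fun x ↦ b.coord j (W x)) :=
    .fderiv_clm_comp (b.coord j).toContinuousLinearMap hW hW'
  have expand (x) : B (W x) x = ∑ j, B (b j) x * b.coord j (W x) := by
    conv_lhs => rw [← b.sum_repr (W x)]
    simp only [map_sum, map_smul, _root_.sum_apply, _root_.smul_apply, smul_eq_mul,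
      Basis.coord_apply, mul_comm]
  calc ∫ x, divergence W x * gaussianWeight B x ∂μ
      = ∑ j, ∫ x, fderiv ℝ (fun y ↦ b.coord j (W y)) x (b j) * gaussianWeight B x ∂μ := by
        simp only [divergence_eq_sum_fderiv_coord b (hW _), Finset.sum_mul]
        exact integral_finsetSum _ fun j _ ↦
          integrable_fderiv_apply_mul_gaussianWeight hB (coord_growth j) (.const (b j))
    _ = ∑ j, ∫ x, B (b j) x * b.coord j (W x) * gaussianWeight B x ∂μ :=
        Finset.sum_congr rfl fun j _ ↦
          integral_fderiv_apply_mul_gaussianWeight hsymm hB (coord_diff j) (coord_growth j) (b j)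
    _ = ∫ x, B (W x) x * gaussianWeight B x ∂μ := by
        simp only [expand, Finset.sum_mul]
        exact (integral_finsetSum _ fun j _ ↦
          integrable_apply_mul_gaussianWeight hB (coord_diff j) (coord_growth j) (b j)).symm

theorem integral_fderiv_tangentialField_mul_gaussianWeight (hsymm : ∀ x y, B x y = B y x)
    (hB : IsCoercive B) (hg : Differentiable ℝ g) (hg' : HasPolynomialGrowth (fderiv ℝ g))
    (s : E) :
    ∫ x, fderiv ℝ g x (tangentialField B s x) * gaussianWeight B x ∂μ =
      (finrank ℝ E - 1) * ∫ x, B s x * g x * gaussianWeight B x ∂μ := by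
  have hV := hasTemperateGrowth_tangentialField B s
  have hV_diff : Differentiable ℝ (tangentialField B s) := hV.1.differentiable (by simp)
  have divergence_eq (x : E) : divergence (fun y ↦ g y • tangentialField B s y) x =
      fderiv ℝ g x (tangentialField B s x) - (finrank ℝ E - 1) * (B s x * g x) := by
    rw [divergence_smul (hg x) (hV_diff x), divergence_tangentialField hsymm]
    ring
  have stein := integral_divergence_mul_gaussianWeight (μ := μ) hsymm hB (hg.fun_smul hV_diff)
    (.fderiv_smul hg hg' hV_diff (.fderiv_of_hasTemperateGrowth hV))
  simp only [divergence_eq, map_smul, _root_.smul_apply, apply_tangentialField,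
    smul_eq_mul, mul_zero, zero_mul, integral_zero, sub_mul _ _ (gaussianWeight B _),
    mul_assoc (finrank ℝ E - 1 : ℝ)] at stein
  rw [integral_sub (integrable_fderiv_apply_mul_gaussianWeight hB hg' hV)
    ((integrable_apply_mul_gaussianWeight hB hg hg' s).const_mul _), integral_const_mul] at stein
  exact sub_eq_zero.1 stein

theorem integral_generalized_stein_gaussianWeight (hsymm : ∀ x y, B x y = B y x)
    (hB : IsCoercive B) (hE : finrank ℝ E ≠ 1) {β : ℝ} (hβ : β ≠ 2) (hg : Differentiable ℝ g)
    (hg' : HasPolynomialGrowth (fderiv ℝ g)) (s : E) :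
    β / ((β - 2) * (finrank ℝ E - 1)) *
        ∫ x, fderiv ℝ g x (tangentialField B s x) * gaussianWeight B x ∂μ =
      ∫ x, (2 / (β - 2) * fderiv ℝ g x s + B s x * g x) * gaussianWeight B x ∂μ := by
  have hE' : (finrank ℝ E : ℝ) - 1 ≠ 0 := sub_ne_zero.2 (mod_cast hE)
  have hβ' : β - 2 ≠ 0 := sub_ne_zero.2 hβ
  simp only [add_mul, mul_assoc (2 / (β - 2))]
  rw [integral_add ((integrable_fderiv_apply_mul_gaussianWeight hB hg' (.const s)).const_mul _)
      (integrable_apply_mul_gaussianWeight hB hg hg' s), integral_const_mul,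
    integral_fderiv_apply_mul_gaussianWeight hsymm hB hg hg',
    integral_fderiv_tangentialField_mul_gaussianWeight hsymm hB hg hg']
  field_simp
  ring

end Stein

section Precision

variable {ι : Type*} [Fintype ι] [DecidableEq ι] {S : Matrix ι ι ℝ}

/-- The bilinear form `(x, y) ↦ xᵀ S⁻¹ y`, whose `gaussianWeight` is the unnormalized density of
`N(0, S)`. -/
noncomputable def precisionForm (S : Matrix ι ι ℝ) : (ι → ℝ) →L[ℝ] (ι → ℝ) →L[ℝ] ℝ :=
  (Matrix.toBilin' S⁻¹).toContinuousBilinearMap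

theorem precisionForm_apply (S : Matrix ι ι ℝ) (x y : ι → ℝ) :
    precisionForm S x y = x ⬝ᵥ S⁻¹ *ᵥ y :=
  Matrix.toBilin'_apply' S⁻¹ x y

theorem precisionForm_comm (hS : S.IsSymm) (x y : ι → ℝ) :
    precisionForm S x y = precisionForm S y x := by
  have hS_inv : S⁻¹ᵀ = S⁻¹ := by rw [Matrix.transpose_nonsing_inv, hS]
  rw [precisionForm_apply, precisionForm_apply, dotProduct_mulVec, ← mulVec_transpose, hS_inv,
    dotProduct_comm]

theorem isCoercive_precisionForm (hS : S.PosDef) : IsCoercive (precisionForm S) :=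
  isCoercive_of_pos fun x hx ↦ by
    simpa only [precisionForm_apply, star_trivial] using hS.inv.dotProduct_mulVec_pos hx

theorem precisionForm_row (hS : IsUnit S) (i : ι) (x : ι → ℝ) :
    precisionForm S (S.row i) x = x i := by
  calc precisionForm S (S.row i) x = (S *ᵥ S⁻¹ *ᵥ x) i := precisionForm_apply S (S.row i) x
    _ = x i := by
      rw [mulVec_mulVec, mul_nonsing_inv S ((isUnit_iff_isUnit_det S).1 hS), one_mulVec]

theorem smul_sub_vecMulVec_mulVec_apply (hS : IsUnit S) (x v : ι → ℝ) (i : ι) :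
    (((x ⬝ᵥ S⁻¹ *ᵥ x) • S - vecMulVec x x) *ᵥ v) i =
      tangentialField (precisionForm S) (S.row i) x ⬝ᵥ v := by
  rw [tangentialField, precisionForm_row hS, precisionForm_apply]
  rfl

end Precision

section Gradient

variable {d : ℕ} {g : (Fin d → ℝ) → ℝ}

theorem dotProduct_grad (g : (Fin d → ℝ) → ℝ) (v x : Fin d → ℝ) :
    v ⬝ᵥ grad g x = fderiv ℝ g x v :=
  calc v ⬝ᵥ grad g x = ∑ j, fderiv ℝ g x (Pi.single j (v j)) := by
        simp only [dotProduct, grad, ← smul_eq_mul, ← map_smul, ← Pi.single_smul]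
        simp only [smul_eq_mul, mul_one]
    _ = fderiv ℝ g x v := by rw [← map_sum, Finset.univ_sum_single]

theorem hasPolynomialGrowth_fderiv_of_grad (hg : HasPolynomialGrowth (grad g)) :
    HasPolynomialGrowth (fderiv ℝ g) := by
  have fderiv_eq : fderiv ℝ g =
      fun x ↦ (dotProductBilin ℝ ℝ).toContinuousBilinearMap (grad g x) := by
    ext1 x
    ext1 v
    exact (dotProduct_grad g v x).symm.trans (dotProduct_comm _ _)
  rw [fderiv_eq]
  exact hg.clm_comp _

end Gradient

theorem gaussian_generalized_stein_identity_general (d : ℕ) (hd : 2 ≤ d)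
    (S : Matrix (Fin d) (Fin d) ℝ) (hS : S.PosDef) (β : ℝ) (hβ : β ≠ 2)
    (p : (Fin d → ℝ) → ℝ)
    (hp : ∀ x, p x = (2 * π) ^ (-(d : ℝ) / 2) * S.det ^ (-(1 : ℝ) / 2) *
      Real.exp (-(dotProduct x (S⁻¹.mulVec x)) / 2))
    (g : (Fin d → ℝ) → ℝ) (hg : Differentiable ℝ g) (hgrow : HasPolynomialGrowth (grad g)) :
    ∀ i, (β / ((β - 2) * ((d : ℝ) - 1))) *
        ∫ x, (((dotProduct x (S⁻¹.mulVec x)) • S - Matrix.vecMulVec x x).mulVec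
          (grad g x)) i * p x
      = ∫ x, ((2 / (β - 2)) * (S.mulVec (grad g x)) i + x i * g x) * p x := by
  intro i
  obtain ⟨K, hp_weight⟩ : ∃ K, ∀ x, p x = gaussianWeight (precisionForm S) x * K :=
    ⟨(2 * π) ^ (-(d : ℝ) / 2) * S.det ^ (-(1 : ℝ) / 2), fun x ↦ by
      rw [hp, gaussianWeight, precisionForm_apply, mul_comm]⟩
  have row_grad (x) : (S *ᵥ grad g x) i = fderiv ℝ g x (S.row i) :=
    dotProduct_grad g (S.row i) x
  have identity := integral_generalized_stein_gaussianWeight (μ := volume)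
    (precisionForm_comm (isHermitian_iff_isSymm.1 hS.1)) (isCoercive_precisionForm hS)
    (by rw [finrank_fin_fun]; lia) hβ hg (hasPolynomialGrowth_fderiv_of_grad hgrow) (S.row i)
  simp only [finrank_fin_fun, precisionForm_row hS.isUnit] at identity
  simp only [smul_sub_vecMulVec_mulVec_apply hS.isUnit, dotProduct_grad, row_grad, hp_weight,
    ← mul_assoc, integral_mul_const]
  rw [identity]

/-- For `X ~ N(0, S)` with `d ≥ 2` and `β ≠ 2`, and `g` continuously differentiable
with `g` and `∇g` of at most polynomial growth,
`(β/((β-2)(d-1))) E[(Xᵀ S⁻¹ X · S - X Xᵀ) ∇g(X)] = E[(2/(β-2)) S ∇g(X) + X g(X)]`. -/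
theorem gaussian_generalized_stein_identity (d : ℕ) (hd : 2 ≤ d)
    (S : Matrix (Fin d) (Fin d) ℝ) (hS : S.PosDef) (β : ℝ) (hβ : β ≠ 2)
    (p : (Fin d → ℝ) → ℝ)
    (hp : ∀ x, p x = (2 * π) ^ (-(d : ℝ) / 2) * S.det ^ (-(1 : ℝ) / 2) *
      Real.exp (-(dotProduct x (S⁻¹.mulVec x)) / 2))
    (g : (Fin d → ℝ) → ℝ) (hg : ContDiff ℝ 1 g)
    (C : ℝ) (n : ℕ) (hgrow : ∀ x, |g x| ≤ C * (1 + ‖x‖) ^ n)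
    (C' : ℝ) (n' : ℕ) (hgrow' : ∀ x i, |grad g x i| ≤ C' * (1 + ‖x‖) ^ n') :
    ∀ i, (β / ((β - 2) * ((d : ℝ) - 1))) *
        ∫ x, (((dotProduct x (S⁻¹.mulVec x)) • S - Matrix.vecMulVec x x).mulVec
          (grad g x)) i * p x
      = ∫ x, ((2 / (β - 2)) * (S.mulVec (grad g x)) i + x i * g x) * p x := by
  have : NeZero d := ⟨by lia⟩
  exact gaussian_generalized_stein_identity_general d hd S hS β hβ p hp g
    (hg.differentiable one_ne_zero) (.of_bound fun x ↦ (pi_norm_le_iff_of_nonempty _).2 (hgrow' x))
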